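/- Let f be a continuous SL₂(ℤ)-invariant function on ℍ of rapid decay at the cusp (f(x,y) = o(y^{-N}) as y→∞ for all N). Then for Re(s) > 1, the Rankin–Selberg integral unfolds: ∫_{𝒟} f(z) E_s(z) y^{-2} dx dy = ∫_0^∞ y^{s-2} a₀(y) dy, where a₀(y) = ∫_0^1 f(x,y) dx and 𝒟 is the standard fundamental domain of SL₂(ℤ). -/

import Mathlib

open Real Set MeasureTheory

/-- Invariance of `f` under the Möbius action of `SL₂(ℤ)` on the upper half-plane,
written in coordinates `z = x + iy`. -/
def ModularInvariant (f : ℝ → ℝ → ℂ) : Prop :=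
  ∀ a b c d : ℤ, a * d - b * c = 1 → ∀ x y : ℝ, 0 < y →
    f ((((a : ℝ) * x + b) * ((c : ℝ) * x + d) + (a : ℝ) * c * y ^ 2) /
        (((c : ℝ) * x + d) ^ 2 + (c : ℝ) ^ 2 * y ^ 2))
      (y / (((c : ℝ) * x + d) ^ 2 + (c : ℝ) ^ 2 * y ^ 2)) = f x y

/-- The standard fundamental domain `𝒟` of `SL₂(ℤ)` in coordinates. -/
def FundDom : Set (ℝ × ℝ) :=
  {p | 0 < p.2 ∧ |p.1| ≤ 1 / 2 ∧ 1 ≤ p.1 ^ 2 + p.2 ^ 2}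

/-- The Eisenstein series `E_s(z) = (1/2) Σ_{gcd(c,d)=1} y^s |cz+d|^{-2s}`, i.e.
`Σ_{γ∈Γ_∞\Γ} Im(γ z)^s`, for `Re(s) > 1`. -/
noncomputable def Eis (s : ℂ) (x y : ℝ) : ℂ :=
  (1 / 2) * ∑' p : ℤ × ℤ, if Int.gcd p.1 p.2 = 1 then
    ((y : ℂ) / ((((p.1 : ℝ) * x + (p.2 : ℝ)) ^ 2 + (p.1 : ℝ) ^ 2 * y ^ 2 : ℝ) : ℂ)) ^ s
  else 0

/-- The constant Fourier coefficient (horocycle average) `a₀(y) = ∫₀¹ f(x,y) dx`. -/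
noncomputable def a0 (f : ℝ → ℝ → ℂ) (y : ℝ) : ℂ := ∫ x in (0 : ℝ)..1, f x y

/-!
Almost every `z ∈ ℍ` is moved into `𝒟` by exactly two elements `±g` of `Γ = SL₂(ℤ)`, so the
translates of the measure `μ|_𝒟` add up to `2μ`, and `∫_𝒟 ∑_γ h(γz) dμ = 2 ∫_ℍ h dμ` for every
integrable `h`. Take `h = f yˢ` on the strip `0 < x ≤ 1` and `h = 0` elsewhere. Among
the `γ ∈ Γ` with a given coprime bottom row `(c, d)`, which form a coset of the integer
translations, exactly one moves `z` into the strip; so the inner sum is `2 f(z) E_s(z)`, and the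
factors `2` cancel. Absolute convergence follows from the bound `∑ |Im(γz)ˢ| ≪ |yˢ|` on `𝒟`.
-/

open UpperHalfPlane Modular MatrixGroups
open scoped ENNReal NNReal

section Unfolding

variable {G X E : Type*} [Group G] [Countable G] [MulAction G X] [MeasurableSpace X]
  [MeasurableConstSMul G X] {μ : Measure X} {D : Set X} {n : ℕ}

theorem tsum_measure_preimage_smul (ν : Measure X) (hD : MeasurableSet D) :
    ∑' g : G, ν ((g • ·) ⁻¹' D) = ∫⁻ x, ({g : G | g • x ∈ D}.encard : ℝ≥0∞) ∂ν := by
  have measurable_preimage (g : G) : MeasurableSet ((g • ·) ⁻¹' D : Set X) :=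
    measurable_const_smul g hD
  calc ∑' g : G, ν ((g • ·) ⁻¹' D)
      = ∑' g : G, ∫⁻ x, ((g • ·) ⁻¹' D).indicator 1 x ∂ν := by
        simp_rw [lintegral_indicator_one (measurable_preimage _)]
    _ = ∫⁻ x, ∑' g : G, {g : G | g • x ∈ D}.indicator 1 g ∂ν :=
        (lintegral_tsum fun g =>
          (measurable_one.indicator (measurable_preimage g)).aemeasurable).symm
    _ = ∫⁻ x, ({g : G | g • x ∈ D}.encard : ℝ≥0∞) ∂ν := by
        congr with x
        simp [← tsum_subtype]

variable [SMulInvariantMeasure G X μ]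

theorem sum_map_smul_restrict_eq_smul (hD : MeasurableSet D)
    (hn : ∀ᵐ x ∂μ, {g : G | g • x ∈ D}.encard = n) :
    Measure.sum (fun g : G => (μ.restrict D).map (g • ·)) = (n : ℝ≥0∞) • μ := by
  ext A hA
  have measure_translate (g : G) :
      (μ.restrict D).map (g • ·) A = μ.restrict A ((g⁻¹ • ·) ⁻¹' D) := by
    rw [Measure.map_apply (measurable_const_smul g) hA,
      Measure.restrict_apply (measurable_const_smul g hA),
      Measure.restrict_apply (measurable_const_smul g⁻¹ hD),
      ← measure_preimage_smul μ g ((g⁻¹ • ·) ⁻¹' D ∩ A), inter_comm]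
    congr 1
    ext x
    simp
  calc Measure.sum (fun g : G => (μ.restrict D).map (g • ·)) A
      = ∑' g : G, μ.restrict A ((g⁻¹ • ·) ⁻¹' D) := by
        simp_rw [Measure.sum_apply _ hA, measure_translate]
    _ = ∑' g : G, μ.restrict A ((g • ·) ⁻¹' D) :=
        (Equiv.inv G).tsum_eq fun g => μ.restrict A ((g • ·) ⁻¹' D)
    _ = ∫⁻ x in A, ({g : G | g • x ∈ D}.encard : ℝ≥0∞) ∂μ :=
        tsum_measure_preimage_smul (μ.restrict A) hD
    _ = ∫⁻ _ in A, (n : ℝ≥0∞) ∂μ :=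
        lintegral_congr_ae <| (ae_restrict_of_ae hn).mono fun x hx => by simp [hx]
    _ = ((n : ℝ≥0∞) • μ) A := by simp

theorem setLIntegral_tsum_smul (hD : MeasurableSet D)
    (hn : ∀ᵐ x ∂μ, {g : G | g • x ∈ D}.encard = n) {H : X → ℝ≥0∞} (hH : AEMeasurable H μ) :
    ∫⁻ x in D, ∑' g : G, H (g • x) ∂μ = n * ∫⁻ x, H x ∂μ := by
  have measurable_translate (g : G) : AEMeasurable (fun x => H (g • x)) (μ.restrict D) :=
    (hH.comp_quasiMeasurePreserving
      (measurePreserving_smul g μ).quasiMeasurePreserving).restrict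
  rw [lintegral_tsum measurable_translate, ← smul_eq_mul, ← lintegral_smul_measure,
    ← sum_map_smul_restrict_eq_smul hD hn, lintegral_sum_measure]
  simp_rw [(measurableEmbedding_const_smul _).lintegral_map]

theorem setIntegral_tsum_smul [NormedAddCommGroup E] [NormedSpace ℝ E] (hD : MeasurableSet D)
    (hn : ∀ᵐ x ∂μ, {g : G | g • x ∈ D}.encard = n) {h : X → E} (hh : Integrable h μ) :
    ∫ x in D, ∑' g : G, h (g • x) ∂μ = n • ∫ x, h x ∂μ := by
  have measurable_translate (g : G) :
      AEStronglyMeasurable (fun x => h (g • x)) (μ.restrict D) :=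
    (hh.aestronglyMeasurable.comp_quasiMeasurePreserving
      (measurePreserving_smul g μ).quasiMeasurePreserving).restrict
  have finite_sum : ∑' g : G, ∫⁻ x in D, ‖h (g • x)‖ₑ ∂μ ≠ ∞ := by
    rw [← lintegral_tsum fun g => (measurable_translate g).enorm,
      setLIntegral_tsum_smul hD hn hh.aestronglyMeasurable.enorm]
    exact ENNReal.mul_ne_top (ENNReal.natCast_ne_top n) hh.2.ne
  have integrable_sum : Integrable h (Measure.sum fun g : G => (μ.restrict D).map (g • ·)) := by
    rw [sum_map_smul_restrict_eq_smul hD hn]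
    exact hh.smul_measure (ENNReal.natCast_ne_top n)
  calc ∫ x in D, ∑' g : G, h (g • x) ∂μ
      = ∑' g : G, ∫ x, h x ∂(μ.restrict D).map (g • ·) := by
        rw [integral_tsum measurable_translate finite_sum]
        simp_rw [(measurableEmbedding_const_smul _).integral_map]
    _ = n • ∫ x, h x ∂μ := by
        rw [← integral_sum_measure integrable_sum, sum_map_smul_restrict_eq_smul hD hn,
          integral_smul_measure, ENNReal.toReal_natCast, Nat.cast_smul_eq_nsmul]

theorem aestronglyMeasurable_of_smul_invariant [TopologicalSpace E]
    [TopologicalSpace.PseudoMetrizableSpace E] (hD : MeasurableSet D) (hn0 : n ≠ 0)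
    (hn : ∀ᵐ x ∂μ, {g : G | g • x ∈ D}.encard = n) {F : X → E}
    (hF : AEStronglyMeasurable F (μ.restrict D)) (hinv : ∀ (g : G) x, F (g • x) = F x) :
    AEStronglyMeasurable F μ := by
  have measurable_translate (g : G) : AEStronglyMeasurable F ((μ.restrict D).map (g • ·)) := by
    rw [(measurableEmbedding_const_smul g).aestronglyMeasurable_map_iff]
    exact hF.congr (.of_forall fun x => (hinv g x).symm)
  have : AEStronglyMeasurable F ((n : ℝ≥0∞) • μ) := by
    rw [← sum_map_smul_restrict_eq_smul hD hn]
    exact aestronglyMeasurable_sum_measure_iff.2 measurable_translate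
  exact this.mono_ac (Measure.absolutelyContinuous_smul (Nat.cast_ne_zero.2 hn0))

end Unfolding

section ModularGroupAction

instance countable_SL2Z : Countable SL(2, ℤ) :=
  haveI : Countable (Matrix (Fin 2) (Fin 2) ℤ) := inferInstanceAs (Countable (Fin 2 → Fin 2 → ℤ))
  Subtype.countable

instance measurableConstSMul_SL2Z : MeasurableConstSMul SL(2, ℤ) ℍ :=
  ⟨fun g => measurable_const_smul (g : GL (Fin 2) ℝ)⟩

instance smulInvariantMeasure_SL2Z : SMulInvariantMeasure SL(2, ℤ) ℍ volume :=
  ⟨fun g _ hA => SMulInvariantMeasure.measure_preimage_smul (g : GL (Fin 2) ℝ) hA⟩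

theorem volume_eq_zero_of_image_coe {A : Set ℍ} (hA : volume ((↑) '' A : Set ℂ) = 0) :
    volume A = 0 := by
  rw [UpperHalfPlane.volume_eq_lintegral]
  exact setLIntegral_measure_zero _ _ hA

theorem volume_re_eq_const (c : ℝ) : volume {z : ℂ | z.re = c} = 0 := by
  rw [← Complex.frontier_setOfPred_re_le c]
  exact (convex_halfSpace_re_le c).addHaar_frontier volume

theorem coe_mem_lines_union_sphere_of_mem_fd_diff_fdo (z : ℍ) (hz : z ∈ 𝒟 \ 𝒟ᵒ) :
    (z : ℂ) ∈ {w : ℂ | w.re = 1 / 2} ∪ {w : ℂ | w.re = -(1 / 2)} ∪ Metric.sphere 0 1 := by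
  obtain ⟨⟨one_le_normSq, abs_re_le⟩, not_mem_fdo⟩ := hz
  rcases one_le_normSq.lt_or_eq with one_lt_normSq | normSq_eq
  · have abs_re_eq : |z.re| = 1 / 2 :=
      abs_re_le.antisymm (not_lt.1 fun h => not_mem_fdo ⟨one_lt_normSq, h⟩)
    exact .inl (eq_or_eq_neg_of_abs_eq abs_re_eq)
  · right
    rw [mem_sphere_zero_iff_norm, ← sq_eq_sq₀ (norm_nonneg _) zero_le_one,
      ← Complex.normSq_eq_norm_sq, ← normSq_eq, one_pow]

theorem volume_fd_diff_fdo : volume (𝒟 \ 𝒟ᵒ : Set ℍ) = 0 :=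
  volume_eq_zero_of_image_coe <| measure_mono_null
    (image_subset_iff.2 coe_mem_lines_union_sphere_of_mem_fd_diff_fdo) <|
      measure_union_null (measure_union_null (volume_re_eq_const _) (volume_re_eq_const _))
        (Measure.addHaar_sphere volume 0 1)

theorem ne_neg_self_SL2Z (g : SL(2, ℤ)) : g ≠ -g := by
  intro h
  have entries_eq_zero (i j : Fin 2) : g i j = 0 :=
    self_eq_neg.1 (congrArg (fun k : SL(2, ℤ) => k i j) h)
  have det_g := g.det_coe
  rw [Matrix.det_fin_two] at det_g
  simp [entries_eq_zero] at det_g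

theorem smul_mem_fd_set_eq_pair {z : ℍ} {g : SL(2, ℤ)} (hg : g • z ∈ 𝒟ᵒ) :
    {h : SL(2, ℤ) | h • z ∈ 𝒟} = {g, -g} := by
  ext h
  constructor
  · intro hh
    have quotient_smul_mem : (h * g⁻¹) • g • z ∈ 𝒟 := by rwa [smul_smul, inv_mul_cancel_right]
    rcases ModularGroup.eq_one_or_neg_one_of_mem_fdo_mem_fd hg quotient_smul_mem with h_eq | h_eq
    · exact .inl (mul_inv_eq_one.1 h_eq)
    · exact .inr (by rw [mem_singleton_iff, mul_inv_eq_iff_eq_mul.1 h_eq, neg_one_mul])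
  · rintro (rfl | rfl)
    · exact ModularGroup.fdo_subset_fd hg
    · rw [mem_ofPred_eq, ModularGroup.SL_neg_smul]
      exact ModularGroup.fdo_subset_fd hg

theorem ae_encard_smul_mem_fd_eq_two :
    ∀ᵐ z : ℍ, {g : SL(2, ℤ) | g • z ∈ 𝒟}.encard = (2 : ℕ) := by
  have ae_orbit_avoids_boundary : ∀ᵐ z : ℍ, ∀ g : SL(2, ℤ), g • z ∉ 𝒟 \ 𝒟ᵒ :=
    ae_all_iff.2 fun g => measure_eq_zero_iff_ae_notMem.1 <|
      (measurePreserving_smul g volume).quasiMeasurePreserving.preimage_null volume_fd_diff_fdo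
  filter_upwards [ae_orbit_avoids_boundary] with z hz
  obtain ⟨g, hg⟩ := ModularGroup.exists_smul_mem_fd z
  have hg_interior : g • z ∈ 𝒟ᵒ := not_not.1 fun h => hz g ⟨hg, h⟩
  rw [smul_mem_fd_set_eq_pair hg_interior, encard_pair (ne_neg_self_SL2Z g), Nat.cast_ofNat]

end ModularGroupAction

section CuspStrip
open ModularGroup

/-- A fundamental domain for the group of integer translations `z ↦ z + n` on `ℍ`; the interval of
real parts is half-open so that every orbit has exactly one representative. -/
def cuspStrip : Set ℍ := {z | z.re ∈ Ioc (0 : ℝ) 1}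

theorem existsUnique_T_zpow_smul_mem_cuspStrip (z : ℍ) : ∃! n : ℤ, T ^ n • z ∈ cuspStrip := by
  simp only [cuspStrip, mem_ofPred_eq, re_T_zpow_smul]
  simpa using existsUnique_add_zsmul_mem_Ioc one_pos z.re 0

theorem exists_eq_T_zpow_mul_of_row_one_eq {g h : SL(2, ℤ)} (h₀ : g 1 0 = h 1 0)
    (h₁ : g 1 1 = h 1 1) : ∃ n : ℤ, g = T ^ n * h := by
  have det_g : g 0 0 * g 1 1 - g 0 1 * g 1 0 = 1 := by rw [← Matrix.det_fin_two, g.det_coe]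
  have det_h : h 0 0 * h 1 1 - h 0 1 * h 1 0 = 1 := by rw [← Matrix.det_fin_two, h.det_coe]
  -- The exponent is the upper right entry of `g * h⁻¹`.
  refine ⟨g 0 1 * h 0 0 - g 0 0 * h 0 1, ?_⟩
  ext i j
  fin_cases i <;> fin_cases j <;> simp [coe_T_zpow, h₀, h₁, Matrix.mul_apply] <;> grind

theorem bijOn_row_one_cuspStrip (z : ℍ) :
    BijOn (fun g : SL(2, ℤ) => (g 1 0, g 1 1)) {g | g • z ∈ cuspStrip}
      {p : ℤ × ℤ | Int.gcd p.1 p.2 = 1} := by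
  refine ⟨fun g _ => Int.isCoprime_iff_gcd_eq_one.1 (bottom_row_coprime g), ?_, ?_⟩
  · intro g hg h hh rows_eq
    obtain ⟨n, rfl⟩ := exists_eq_T_zpow_mul_of_row_one_eq (Prod.ext_iff.1 rows_eq).1
      (Prod.ext_iff.1 rows_eq).2
    have n_eq_zero : n = 0 := (existsUnique_T_zpow_smul_mem_cuspStrip (h • z)).unique
      (by rwa [smul_smul]) (by rwa [zpow_zero, one_smul])
    rw [n_eq_zero, zpow_zero, one_mul]
  · rintro ⟨c, d⟩ hcd
    obtain ⟨g, -, hg⟩ := bottom_row_surj (R := ℤ) (a := ![c, d])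
      (Int.isCoprime_iff_gcd_eq_one.2 hcd)
    obtain ⟨n, hn, -⟩ := existsUnique_T_zpow_smul_mem_cuspStrip (g • z)
    refine ⟨T ^ n * g, by rwa [smul_smul] at hn, ?_⟩
    simp [show g 1 = ![c, d] from hg]

theorem tsum_indicator_cuspStrip_smul {M : Type*} [AddCommMonoid M] [TopologicalSpace M] {z : ℍ}
    {k : ℍ → M} {φ : ℤ × ℤ → M} (hk : ∀ g : SL(2, ℤ), k (g • z) = φ (g 1 0, g 1 1)) :
    ∑' g : SL(2, ℤ), cuspStrip.indicator k (g • z) =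
      ∑' p : ℤ × ℤ, if Int.gcd p.1 p.2 = 1 then φ p else 0 :=
  calc ∑' g : SL(2, ℤ), cuspStrip.indicator k (g • z)
      = ∑' g : {g : SL(2, ℤ) | g • z ∈ cuspStrip}, φ (g.1 1 0, g.1 1 1) := by
        rw [tsum_subtype _ fun g : SL(2, ℤ) => φ (g 1 0, g 1 1)]
        simp_rw [← hk]
        rfl
    _ = ∑' p : {p : ℤ × ℤ | Int.gcd p.1 p.2 = 1}, φ p :=
        ((bijOn_row_one_cuspStrip z).equiv _).tsum_eq fun p => φ p
    _ = ∑' p : ℤ × ℤ, if Int.gcd p.1 p.2 = 1 then φ p else 0 := by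
        rw [tsum_subtype]
        exact tsum_congr fun p => by simp [indicator_apply]

end CuspStrip

section EisensteinSeries

theorem norm_sq_intCast_mul_add_intCast (z : ℍ) (c d : ℤ) :
    ‖(c : ℂ) * z + d‖ ^ 2 = (c * z.re + d) ^ 2 + c ^ 2 * z.im ^ 2 := by
  rw [← Complex.normSq_eq_norm_sq, Complex.normSq_apply]
  simp
  ring

/-- The imaginary part of `γ z` for any `γ ∈ SL₂(ℤ)` with bottom row `p = (c, d)`. -/
noncomputable def imSMulOfRow (z : ℍ) (p : ℤ × ℤ) : ℝ := z.im / ‖(p.1 : ℂ) * z + p.2‖ ^ 2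

theorem im_smul_eq_imSMulOfRow (g : SL(2, ℤ)) (z : ℍ) :
    (g • z).im = imSMulOfRow z (g 1 0, g 1 1) := by
  rw [ModularGroup.im_smul_eq_div_normSq, ModularGroup.denom_apply, Complex.normSq_eq_norm_sq,
    imSMulOfRow]

theorem re_smul_eq_div (g : SL(2, ℤ)) (z : ℍ) :
    (g • z).re = ((g 0 0 * z.re + g 0 1) * (g 1 0 * z.re + g 1 1) + g 0 0 * g 1 0 * z.im ^ 2) /
      ‖(g 1 0 : ℂ) * z + g 1 1‖ ^ 2 := by
  rw [← UpperHalfPlane.coe_re, UpperHalfPlane.coe_specialLinearGroup_apply, Complex.div_re,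
    ← Complex.normSq_eq_norm_sq]
  simp
  ring

theorem ModularInvariant.comp_smul {f : ℝ → ℝ → ℂ} (hf : ModularInvariant f) (g : SL(2, ℤ))
    (z : ℍ) : f (g • z).re (g • z).im = f z.re z.im := by
  have det_g : g 0 0 * g 1 1 - g 0 1 * g 1 0 = 1 := by rw [← Matrix.det_fin_two, g.det_coe]
  rw [re_smul_eq_div, im_smul_eq_imSMulOfRow, imSMulOfRow, norm_sq_intCast_mul_add_intCast]
  exact hf _ _ _ _ det_g _ _ z.im_pos

theorem Eis_eq_tsum_imSMulOfRow (s : ℂ) (z : ℍ) :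
    Eis s z.re z.im =
      1 / 2 * ∑' p : ℤ × ℤ, if Int.gcd p.1 p.2 = 1 then (imSMulOfRow z p : ℂ) ^ s else 0 := by
  simp_rw [Eis, imSMulOfRow, Complex.ofReal_div, norm_sq_intCast_mul_add_intCast]

theorem imSMulOfRow_nonneg (z : ℍ) (p : ℤ × ℤ) : 0 ≤ imSMulOfRow z p :=
  div_nonneg z.im_pos.le (sq_nonneg _)

theorem imSMulOfRow_rpow (z : ℍ) (p : ℤ × ℤ) (σ : ℝ) :
    imSMulOfRow z p ^ σ = z.im ^ σ * ‖(p.1 : ℂ) * z + p.2‖ ^ (-(2 * σ)) := by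
  rw [imSMulOfRow, Real.div_rpow z.im_pos.le (sq_nonneg _), Real.rpow_neg (norm_nonneg _),
    Real.rpow_mul (norm_nonneg _), Real.rpow_two, div_eq_mul_inv]

theorem fd_subset_verticalStrip : 𝒟 ⊆ verticalStrip (1 / 2) (1 / 2) := fun z hz =>
  ⟨hz.2, by nlinarith [ModularGroup.three_le_four_mul_im_sq_of_mem_fd hz, z.im_pos]⟩

theorem summable_norm_intPair_rpow {k : ℝ} (hk : 2 < k) :
    Summable fun p : ℤ × ℤ => ‖![p.1, p.2]‖ ^ (-k) :=
  (finTwoArrowEquiv ℤ).symm.summable_iff.2 (EisensteinSeries.summable_one_div_norm_rpow hk)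

theorem exists_tsum_enorm_imSMulOfRow_cpow_le {s : ℂ} (hs : 1 < s.re) {A B : ℝ} (hB : 0 < B) :
    ∃ C : ℝ≥0∞, C ≠ ∞ ∧ ∀ z ∈ verticalStrip A B,
      ∑' p : ℤ × ℤ, ‖(imSMulOfRow z p : ℂ) ^ s‖ₑ ≤ C * ‖(z.im : ℂ) ^ s‖ₑ := by
  set r := EisensteinSeries.r ⟨⟨A, B⟩, hB⟩
  have norm_term_le {z : ℍ} (hz : z ∈ verticalStrip A B) (p : ℤ × ℤ) :
      ‖(imSMulOfRow z p : ℂ) ^ s‖ ≤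
        r ^ (-(2 * s.re)) * ‖![p.1, p.2]‖ ^ (-(2 * s.re)) * ‖(z.im : ℂ) ^ s‖ := by
    rw [Complex.norm_cpow_eq_rpow_re_of_nonneg (imSMulOfRow_nonneg z p) (by linarith),
      Complex.norm_cpow_eq_rpow_re_of_pos z.im_pos, imSMulOfRow_rpow, mul_comm]
    have := z.im_pos
    gcongr
    exact EisensteinSeries.summand_bound_of_mem_verticalStrip (by linarith) ![p.1, p.2] hB hz
  have summable_bound :=
    (summable_norm_intPair_rpow (k := 2 * s.re) (by linarith)).mul_left (r ^ (-(2 * s.re)))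
  refine ⟨_, summable_bound.tsum_ofReal_ne_top, fun z hz => ?_⟩
  rw [← ENNReal.tsum_mul_right]
  refine ENNReal.tsum_le_tsum fun p => ?_
  rw [← ofReal_norm, ← ofReal_norm, ← ENNReal.ofReal_mul']
  · exact ENNReal.ofReal_le_ofReal (norm_term_le hz p)
  · exact norm_nonneg _

end EisensteinSeries

section Coordinates

variable {E : Type*} [NormedAddCommGroup E] [NormedSpace ℝ E]

/-- The real coordinates `(x, y)` of `z = x + iy ∈ ℍ`. -/
def realCoords (z : ℍ) : ℝ × ℝ := (z.re, z.im)

theorem measurableEmbedding_realCoords : MeasurableEmbedding realCoords :=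
  Complex.measurableEquivRealProd.measurableEmbedding.comp measurableEmbedding_coe

theorem measurePreserving_realCoords_comap :
    MeasurePreserving realCoords (volume.comap UpperHalfPlane.coe)
      (volume.restrict {p | 0 < p.2}) := by
  have measurePreserving_coe : MeasurePreserving UpperHalfPlane.coe
      (volume.comap UpperHalfPlane.coe) (volume.restrict {z | 0 < z.im}) :=
    ⟨measurable_coe, by rw [measurableEmbedding_coe.map_comap, UpperHalfPlane.range_coe]⟩
  exact (Complex.volume_preserving_equiv_real_prod.restrict_preimage
    (measurableSet_lt measurable_const measurable_snd)).comp measurePreserving_coe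

theorem volume_eq_withDensity_realCoords :
    (volume : Measure ℍ) = (volume.comap UpperHalfPlane.coe).withDensity fun z =>
      (((‖(realCoords z).2‖₊ ^ 2)⁻¹ : ℝ≥0) : ℝ≥0∞) := by
  rw [UpperHalfPlane.volume_def]
  congr with z
  rw [one_div, inv_pow, realCoords, Real.nnnorm_of_nonneg z.im_pos.le]

theorem measurable_realCoords_snd_nnnorm_sq_inv :
    Measurable fun z : ℍ => (‖(realCoords z).2‖₊ ^ 2)⁻¹ :=
  (measurableEmbedding_realCoords.measurable.snd.nnnorm.pow_const 2).inv

theorem nnnorm_sq_inv_smul (y : ℝ) (v : E) : (‖y‖₊ ^ 2)⁻¹ • v = (y ^ 2)⁻¹ • v := by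
  rw [NNReal.smul_def, NNReal.coe_inv, NNReal.coe_pow, coe_nnnorm, norm_eq_abs, sq_abs]

theorem setIntegral_preimage_realCoords {A : Set (ℝ × ℝ)} (hA : MeasurableSet A)
    (hA_pos : A ⊆ {p | 0 < p.2}) (h : ℝ × ℝ → E) :
    ∫ z in realCoords ⁻¹' A, h (realCoords z) = ∫ p in A, (p.2 ^ 2)⁻¹ • h p := by
  rw [volume_eq_withDensity_realCoords, setIntegral_withDensity_eq_setIntegral_smul
      measurable_realCoords_snd_nnnorm_sq_inv _ (measurableEmbedding_realCoords.measurable hA),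
    measurePreserving_realCoords_comap.setIntegral_preimage_emb measurableEmbedding_realCoords
      (fun p => (‖p.2‖₊ ^ 2)⁻¹ • h p), Measure.restrict_restrict hA, inter_eq_left.2 hA_pos]
  simp_rw [nnnorm_sq_inv_smul]

theorem integrableOn_preimage_realCoords_iff {A : Set (ℝ × ℝ)} (hA : MeasurableSet A)
    (hA_pos : A ⊆ {p | 0 < p.2}) {h : ℝ × ℝ → E} :
    IntegrableOn (fun z => h (realCoords z)) (realCoords ⁻¹' A) ↔
      IntegrableOn (fun p => (p.2 ^ 2)⁻¹ • h p) A := by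
  rw [volume_eq_withDensity_realCoords, IntegrableOn,
    restrict_withDensity (measurableEmbedding_realCoords.measurable hA),
    integrable_withDensity_iff_integrable_smul measurable_realCoords_snd_nnnorm_sq_inv]
  simp_rw [nnnorm_sq_inv_smul]
  refine (measurePreserving_realCoords_comap.integrableOn_comp_preimage
    measurableEmbedding_realCoords (f := fun p => (p.2 ^ 2)⁻¹ • h p)).trans ?_
  rw [IntegrableOn, Measure.restrict_restrict hA, inter_eq_left.2 hA_pos, IntegrableOn]

end Coordinates

section UnfoldingUpperHalfPlane

variable {F : ℍ → ℂ} {s : ℂ}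

theorem measurable_im_cpow (s : ℂ) : Measurable fun z : ℍ => (z.im : ℂ) ^ s :=
  (Complex.measurable_ofReal.comp UpperHalfPlane.continuous_im.measurable).pow_const s

theorem measurableSet_cuspStrip : MeasurableSet cuspStrip :=
  UpperHalfPlane.continuous_re.measurable measurableSet_Ioc

theorem aestronglyMeasurable_of_mul_im_cpow {μ : Measure ℍ}
    (hF : AEStronglyMeasurable (fun z => F z * (z.im : ℂ) ^ s) μ) : AEStronglyMeasurable F μ := by
  refine (hF.mul (measurable_im_cpow (-s)).aestronglyMeasurable).congr (.of_forall fun z => ?_)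
  have im_ne_zero : (z.im : ℂ) ≠ 0 := Complex.ofReal_ne_zero.2 z.im_ne_zero
  simp [mul_assoc, ← Complex.cpow_add _ _ im_ne_zero]

theorem mul_im_cpow_smul (hinv : ∀ (g : SL(2, ℤ)) z, F (g • z) = F z) (s : ℂ) (g : SL(2, ℤ))
    (z : ℍ) : F (g • z) * ((g • z).im : ℂ) ^ s =
      F z * (imSMulOfRow z (g 1 0, g 1 1) : ℂ) ^ s := by
  rw [hinv, im_smul_eq_imSMulOfRow]

theorem tsum_indicator_cuspStrip_mul_im_cpow (hinv : ∀ (g : SL(2, ℤ)) z, F (g • z) = F z)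
    (s : ℂ) (z : ℍ) :
    ∑' g : SL(2, ℤ), cuspStrip.indicator (fun w => F w * (w.im : ℂ) ^ s) (g • z) =
      2 * (F z * Eis s z.re z.im) := by
  rw [tsum_indicator_cuspStrip_smul (φ := fun p => F z * (imSMulOfRow z p : ℂ) ^ s)
    fun g => mul_im_cpow_smul hinv s g z, Eis_eq_tsum_imSMulOfRow]
  simp_rw [← mul_ite_zero, tsum_mul_left]
  ring

theorem exists_tsum_enorm_indicator_cuspStrip_le (hinv : ∀ (g : SL(2, ℤ)) z, F (g • z) = F z)
    (hs : 1 < s.re) :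
    ∃ C : ℝ≥0∞, C ≠ ∞ ∧ ∀ z ∈ 𝒟,
      ∑' g : SL(2, ℤ), ‖cuspStrip.indicator (fun w => F w * (w.im : ℂ) ^ s) (g • z)‖ₑ ≤
        C * ‖F z * (z.im : ℂ) ^ s‖ₑ := by
  obtain ⟨C, hC, tsum_le⟩ := exists_tsum_enorm_imSMulOfRow_cpow_le hs (A := 1 / 2) one_half_pos
  refine ⟨C, hC, fun z hz => ?_⟩
  calc ∑' g : SL(2, ℤ), ‖cuspStrip.indicator (fun w => F w * (w.im : ℂ) ^ s) (g • z)‖ₑ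
      = ∑' p : ℤ × ℤ, if Int.gcd p.1 p.2 = 1 then ‖F z * (imSMulOfRow z p : ℂ) ^ s‖ₑ else 0 := by
        simp_rw [enorm_indicator_eq_indicator_enorm]
        exact tsum_indicator_cuspStrip_smul fun g => by rw [mul_im_cpow_smul hinv]
    _ ≤ ∑' p : ℤ × ℤ, ‖F z * (imSMulOfRow z p : ℂ) ^ s‖ₑ :=
        ENNReal.tsum_le_tsum fun p => by split_ifs <;> simp
    _ = ‖F z‖ₑ * ∑' p : ℤ × ℤ, ‖(imSMulOfRow z p : ℂ) ^ s‖ₑ := by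
        simp_rw [enorm_mul, ENNReal.tsum_mul_left]
    _ ≤ ‖F z‖ₑ * (C * ‖(z.im : ℂ) ^ s‖ₑ) := by
        gcongr
        exact tsum_le z (fd_subset_verticalStrip hz)
    _ = C * ‖F z * (z.im : ℂ) ^ s‖ₑ := by rw [enorm_mul, mul_left_comm]

theorem integrableOn_cuspStrip_mul_im_cpow (hinv : ∀ (g : SL(2, ℤ)) z, F (g • z) = F z)
    (hs : 1 < s.re) (hint : IntegrableOn (fun z => F z * (z.im : ℂ) ^ s) 𝒟) :
    IntegrableOn (fun z => F z * (z.im : ℂ) ^ s) cuspStrip := by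
  have measurableSet_fd : MeasurableSet 𝒟 := ModularGroup.isClosed_fd.measurableSet
  have aesm_F : AEStronglyMeasurable F volume :=
    aestronglyMeasurable_of_smul_invariant measurableSet_fd two_ne_zero
      ae_encard_smul_mem_fd_eq_two (aestronglyMeasurable_of_mul_im_cpow hint.1) hinv
  have aesm_indicator : AEStronglyMeasurable
      (cuspStrip.indicator fun z => F z * (z.im : ℂ) ^ s) volume :=
    (aesm_F.mul (measurable_im_cpow s).aestronglyMeasurable).indicator measurableSet_cuspStrip
  obtain ⟨C, hC, tsum_le⟩ := exists_tsum_enorm_indicator_cuspStrip_le hinv hs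
  have two_mul_lintegral_lt_top :
      (2 : ℕ) * ∫⁻ z, ‖cuspStrip.indicator (fun w => F w * (w.im : ℂ) ^ s) z‖ₑ < ∞ := by
    rw [← setLIntegral_tsum_smul measurableSet_fd ae_encard_smul_mem_fd_eq_two
      aesm_indicator.enorm]
    calc _ ≤ ∫⁻ z in 𝒟, C * ‖F z * (z.im : ℂ) ^ s‖ₑ :=
          setLIntegral_mono' measurableSet_fd tsum_le
      _ = C * ∫⁻ z in 𝒟, ‖F z * (z.im : ℂ) ^ s‖ₑ := lintegral_const_mul' _ _ hC
      _ < ∞ := ENNReal.mul_lt_top hC.lt_top hint.2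
  rw [← integrable_indicator_iff measurableSet_cuspStrip]
  exact ⟨aesm_indicator, ENNReal.lt_top_of_mul_ne_top_right two_mul_lintegral_lt_top.ne
    (by norm_num)⟩

theorem setIntegral_fd_mul_Eis (hinv : ∀ (g : SL(2, ℤ)) z, F (g • z) = F z) (hs : 1 < s.re)
    (hint : IntegrableOn (fun z => F z * (z.im : ℂ) ^ s) 𝒟) :
    ∫ z in 𝒟, F z * Eis s z.re z.im = ∫ z in cuspStrip, F z * (z.im : ℂ) ^ s := by
  have integrable_indicator :=
    (integrableOn_cuspStrip_mul_im_cpow hinv hs hint).integrable_indicator measurableSet_cuspStrip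
  have unfolded := setIntegral_tsum_smul ModularGroup.isClosed_fd.measurableSet
    ae_encard_smul_mem_fd_eq_two integrable_indicator
  simp_rw [tsum_indicator_cuspStrip_mul_im_cpow hinv, integral_const_mul] at unfolded
  rw [integral_indicator measurableSet_cuspStrip, nsmul_eq_mul, Nat.cast_ofNat] at unfolded
  exact mul_left_cancel₀ two_ne_zero unfolded

end UnfoldingUpperHalfPlane

section FundamentalDomainCoordinates

variable {s : ℂ} {f : ℝ → ℝ → ℂ} {A : Set (ℝ × ℝ)}

theorem preimage_realCoords_fundDom : realCoords ⁻¹' FundDom = 𝒟 := by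
  ext z
  simp only [FundDom, realCoords, mem_preimage, mem_ofPred_eq, z.im_pos, true_and,
    ModularGroup.fd, Complex.normSq_apply, coe_re, coe_im, sq]
  exact and_comm

theorem preimage_realCoords_Ioc_prod_Ioi :
    realCoords ⁻¹' (Ioc (0 : ℝ) 1 ×ˢ Ioi (0 : ℝ)) = cuspStrip := by
  ext z
  exact and_iff_left z.im_pos

theorem measurableSet_fundDom : MeasurableSet FundDom := by
  unfold FundDom
  measurability

theorem inv_sq_smul_mul_cpow {y : ℝ} (hy : 0 < y) (w s : ℂ) :
    (y ^ 2)⁻¹ • (w * (y : ℂ) ^ s) = (y : ℂ) ^ (s - 2) * w := by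
  rw [Complex.cpow_sub _ _ (Complex.ofReal_ne_zero.2 hy.ne'), Complex.cpow_ofNat,
    Complex.real_smul, Complex.ofReal_inv, Complex.ofReal_pow]
  ring

theorem integrableOn_preimage_realCoords_mul_im_cpow_iff (hA : MeasurableSet A)
    (hA_pos : A ⊆ {p | 0 < p.2}) :
    IntegrableOn (fun z : ℍ => f z.re z.im * (z.im : ℂ) ^ s) (realCoords ⁻¹' A) ↔
      IntegrableOn (fun p => (p.2 : ℂ) ^ (s - 2) * f p.1 p.2) A :=
  (integrableOn_preimage_realCoords_iff hA hA_pos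
    (h := fun p => f p.1 p.2 * (p.2 : ℂ) ^ s)).trans <|
      integrableOn_congr_fun (fun _ hp => inv_sq_smul_mul_cpow (hA_pos hp) _ s) hA

theorem setIntegral_preimage_realCoords_mul_im_cpow (hA : MeasurableSet A)
    (hA_pos : A ⊆ {p | 0 < p.2}) :
    ∫ z in realCoords ⁻¹' A, f z.re z.im * (z.im : ℂ) ^ s =
      ∫ p in A, (p.2 : ℂ) ^ (s - 2) * f p.1 p.2 :=
  (setIntegral_preimage_realCoords hA hA_pos fun p => f p.1 p.2 * (p.2 : ℂ) ^ s).trans <|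
    setIntegral_congr_fun hA fun _ hp => inv_sq_smul_mul_cpow (hA_pos hp) _ s

theorem setIntegral_fundDom_div_sq (h : ℝ × ℝ → ℂ) :
    ∫ p in FundDom, h p / ((p.2 ^ 2 : ℝ) : ℂ) = ∫ z in 𝒟, h (realCoords z) := by
  rw [← preimage_realCoords_fundDom,
    setIntegral_preimage_realCoords measurableSet_fundDom fun _ hp => hp.1]
  simp_rw [Complex.real_smul, Complex.ofReal_inv, div_eq_inv_mul]

theorem setIntegral_Ioc_prod_Ioi_cpow_mul {w : ℂ}
    (hint : IntegrableOn (fun p : ℝ × ℝ => (p.2 : ℂ) ^ w * f p.1 p.2)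
      (Ioc (0 : ℝ) 1 ×ˢ Ioi (0 : ℝ))) :
    ∫ p in Ioc (0 : ℝ) 1 ×ˢ Ioi (0 : ℝ), (p.2 : ℂ) ^ w * f p.1 p.2 =
      ∫ y in Ioi (0 : ℝ), (y : ℂ) ^ w * a0 f y := by
  rw [IntegrableOn, Measure.volume_eq_prod, ← Measure.prod_restrict] at hint
  rw [Measure.volume_eq_prod, ← Measure.prod_restrict, integral_prod_symm _ hint]
  simp_rw [integral_const_mul, a0, intervalIntegral.integral_of_le zero_le_one]

end FundamentalDomainCoordinates

section DecayAtCusp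

variable {f : ℝ → ℝ → ℂ}

theorem fundDom_subset_rectangle_union_cusp :
    FundDom ⊆ (Icc (-(1 / 2)) (1 / 2) ×ˢ Icc (1 / 2) 1) ∪ (Icc (-(1 / 2)) (1 / 2) ×ˢ Ioi 1) := by
  rintro ⟨x, y⟩ ⟨hy, hx, hxy⟩
  have half_le : 1 / 2 ≤ y := by nlinarith [sq_le_sq' (abs_le.1 hx).1 (abs_le.1 hx).2]
  exact (le_or_gt y 1).imp (fun h => ⟨abs_le.1 hx, half_le, h⟩) fun h => ⟨abs_le.1 hx, h⟩

theorem continuousOn_cpow_mul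
    (hcont : ContinuousOn (fun p : ℝ × ℝ => f p.1 p.2) {p | 0 < p.2}) (w : ℂ) :
    ContinuousOn (fun p : ℝ × ℝ => (p.2 : ℂ) ^ w * f p.1 p.2) {p | 0 < p.2} :=
  ((Complex.continuous_ofReal.comp continuous_snd).continuousOn.cpow continuousOn_const
    fun _ hp => Complex.ofReal_mem_slitPlane.2 hp).mul hcont

theorem integrableOn_prod_Ioi_cpow_mul_of_decay {I : Set ℝ} (hI : MeasurableSet I)
    (hI_finite : volume I ≠ ∞)
    (hcont : ContinuousOn (fun p : ℝ × ℝ => f p.1 p.2) {p | 0 < p.2}) {w : ℂ} {C κ : ℝ}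
    (hκ : w.re + 1 < κ) (hdecay : ∀ x y : ℝ, 1 ≤ y → ‖f x y‖ ≤ C * y ^ (-κ)) :
    IntegrableOn (fun p : ℝ × ℝ => (p.2 : ℂ) ^ w * f p.1 p.2) (I ×ˢ Ioi 1) := by
  have integrable_bound :
      IntegrableOn (fun p : ℝ × ℝ => C * p.2 ^ (w.re - κ)) (I ×ˢ Ioi 1) := by
    have : IsFiniteMeasure (volume.restrict I) := isFiniteMeasure_restrict.2 hI_finite
    rw [IntegrableOn, Measure.volume_eq_prod, ← Measure.prod_restrict]
    exact ((integrableOn_Ioi_rpow_of_lt (by linarith) one_pos).const_mul C).comp_snd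
      (volume.restrict I)
  have measurable_region : MeasurableSet (I ×ˢ Ioi (1 : ℝ)) := hI.prod measurableSet_Ioi
  refine integrable_bound.mono' (((continuousOn_cpow_mul hcont w).mono
    fun p hp => one_pos.trans (mem_Ioi.1 hp.2)).aestronglyMeasurable measurable_region) ?_
  refine ae_restrict_of_forall_mem measurable_region fun ⟨x, y⟩ ⟨_, one_lt_y⟩ => ?_
  have y_pos : 0 < y := zero_lt_one.trans one_lt_y
  calc ‖(y : ℂ) ^ w * f x y‖ = y ^ w.re * ‖f x y‖ := by
        rw [norm_mul, Complex.norm_cpow_eq_rpow_re_of_pos y_pos]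
    _ ≤ y ^ w.re * (C * y ^ (-κ)) := by
        gcongr
        exact hdecay x y (le_of_lt one_lt_y)
    _ = C * y ^ (w.re - κ) := by
        rw [mul_left_comm, ← Real.rpow_add y_pos, sub_eq_add_neg]

theorem integrableOn_fundDom_cpow_mul_of_decay
    (hcont : ContinuousOn (fun p : ℝ × ℝ => f p.1 p.2) {p | 0 < p.2}) {w : ℂ} {C κ : ℝ}
    (hκ : w.re + 1 < κ) (hdecay : ∀ x y : ℝ, 1 ≤ y → ‖f x y‖ ≤ C * y ^ (-κ)) :
    IntegrableOn (fun p : ℝ × ℝ => (p.2 : ℂ) ^ w * f p.1 p.2) FundDom := by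
  refine (IntegrableOn.union ?_ ?_).mono_set fundDom_subset_rectangle_union_cusp
  · exact ((continuousOn_cpow_mul hcont w).mono fun p hp =>
      one_half_pos.trans_le hp.2.1).integrableOn_compact (isCompact_Icc.prod isCompact_Icc)
  · exact integrableOn_prod_Ioi_cpow_mul_of_decay measurableSet_Icc measure_Icc_lt_top.ne hcont
      hκ hdecay

theorem integrableOn_fundDom_cpow_mul_of_rapid_decay
    (hcont : ContinuousOn (fun p : ℝ × ℝ => f p.1 p.2) {p | 0 < p.2})
    (hdecay : ∀ N : ℕ, ∃ C : ℝ, ∀ x y : ℝ, 1 ≤ y → ‖f x y‖ ≤ C * y ^ (-(N : ℝ))) (w : ℂ) :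
    IntegrableOn (fun p : ℝ × ℝ => (p.2 : ℂ) ^ w * f p.1 p.2) FundDom := by
  obtain ⟨N, hN⟩ := exists_nat_gt (w.re + 1)
  obtain ⟨C, hC⟩ := hdecay N
  exact integrableOn_fundDom_cpow_mul_of_decay hcont hN hC

end DecayAtCusp

theorem rankin_selberg_unfolding_general (f : ℝ → ℝ → ℂ) (hinv : ModularInvariant f) (s : ℂ)
    (hs : 1 < s.re)
    (hint : IntegrableOn (fun p : ℝ × ℝ => (p.2 : ℂ) ^ (s - 2) * f p.1 p.2) FundDom) :
    ∫ p in FundDom, f p.1 p.2 * Eis s p.1 p.2 / ((p.2 ^ 2 : ℝ) : ℂ) =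
      ∫ y in Ioi (0 : ℝ), (y : ℂ) ^ (s - 2) * a0 f y := by
  have hstrip : MeasurableSet (Ioc (0 : ℝ) 1 ×ˢ Ioi (0 : ℝ)) :=
    measurableSet_Ioc.prod measurableSet_Ioi
  have hstrip_pos : Ioc (0 : ℝ) 1 ×ˢ Ioi (0 : ℝ) ⊆ {p | 0 < p.2} := fun _ hp => hp.2
  have hint_fd : IntegrableOn (fun z : ℍ => f z.re z.im * (z.im : ℂ) ^ s) 𝒟 := by
    rw [← preimage_realCoords_fundDom]
    exact (integrableOn_preimage_realCoords_mul_im_cpow_iff measurableSet_fundDom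
      fun _ hp => hp.1).2 hint
  have hint_strip : IntegrableOn (fun p : ℝ × ℝ => (p.2 : ℂ) ^ (s - 2) * f p.1 p.2)
      (Ioc (0 : ℝ) 1 ×ˢ Ioi (0 : ℝ)) := by
    rw [← integrableOn_preimage_realCoords_mul_im_cpow_iff hstrip hstrip_pos,
      preimage_realCoords_Ioc_prod_Ioi]
    exact integrableOn_cuspStrip_mul_im_cpow hinv.comp_smul hs hint_fd
  calc ∫ p in FundDom, f p.1 p.2 * Eis s p.1 p.2 / ((p.2 ^ 2 : ℝ) : ℂ)
      = ∫ z in 𝒟, f z.re z.im * Eis s z.re z.im :=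
        setIntegral_fundDom_div_sq fun p => f p.1 p.2 * Eis s p.1 p.2
    _ = ∫ z in cuspStrip, f z.re z.im * (z.im : ℂ) ^ s :=
        setIntegral_fd_mul_Eis hinv.comp_smul hs hint_fd
    _ = ∫ p in Ioc (0 : ℝ) 1 ×ˢ Ioi (0 : ℝ), (p.2 : ℂ) ^ (s - 2) * f p.1 p.2 := by
        rw [← preimage_realCoords_Ioc_prod_Ioi,
          setIntegral_preimage_realCoords_mul_im_cpow hstrip hstrip_pos]
    _ = ∫ y in Ioi (0 : ℝ), (y : ℂ) ^ (s - 2) * a0 f y :=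
        setIntegral_Ioc_prod_Ioi_cpow_mul hint_strip

/-- Rankin–Selberg unfolding for a continuous modular invariant function of rapid
decay at the cusp: for `Re(s) > 1`,
`∫_𝒟 f(z) E_s(z) y^{-2} dx dy = ∫₀^∞ y^{s-2} a₀(y) dy`. -/
theorem rankin_selberg_unfolding (f : ℝ → ℝ → ℂ)
    (hcont : ContinuousOn (fun p : ℝ × ℝ => f p.1 p.2) {p | 0 < p.2})
    (hinv : ModularInvariant f)
    (hdecay : ∀ N : ℕ, ∃ C : ℝ, ∀ x y : ℝ, 1 ≤ y → ‖f x y‖ ≤ C * y ^ (-(N : ℝ)))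
    (s : ℂ) (hs : 1 < s.re) :
    ∫ p in FundDom, f p.1 p.2 * Eis s p.1 p.2 / ((p.2 ^ 2 : ℝ) : ℂ) =
      ∫ y in Ioi (0 : ℝ), (y : ℂ) ^ (s - 2) * a0 f y :=
  rankin_selberg_unfolding_general f hinv s hs
    (integrableOn_fundDom_cpow_mul_of_rapid_decay hcont hdecay (s - 2))
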